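/- Lower bound for the heat kernel surface integral (proof of Theorem 3.2): Let n ≥ 2, R > 0, and let Γ(x,t) = (4πt)^{−n/2} exp(−|x|²/(4t)) be the fundamental solution of the heat equation in ℝⁿ. Let σ denote the (n−1)-dimensional surface measure on the sphere S_R = {y ∈ ℝⁿ : |y| = R}. Then there exist constants c > 0 and s₀ > 0 such that for every x ∈ S_R and every s ∈ (0, s₀): ∫_{S_R} Γ(x−y, s) dσ(y) ≥ c s^{−1/2}. -/

import Mathlib

/-!
The integrand is positive, so the integral over the sphere is at least the integral over the cap
`S_R ∩ closedBall x √s`, where the Gaussian factor is at least `exp (-1/4)`. Hence it suffices that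
the cap has `(n-1)`-dimensional measure at least a constant times `s^((n-1)/2)`. This holds because
the orthogonal projection onto the hyperplane `x^⊥` does not increase Hausdorff measure and, for
`√s ≤ R`, maps the cap onto a set containing the ball of radius `√s / 2`
(`measure_sphere_cap_ge`).

The Bochner integral is only meaningful if the surface measure of the sphere is finite
(`measure_sphere_lt_top`): near each of its points `x` the sphere is the image under a `C¹` map
(`capMap`) of a neighbourhood of `0` in `x^⊥`, and such a map is locally Lipschitz; compactness
of the sphere does the rest.
-/

open Set Real Metric Filter Topology MeasureTheory

/-- The fundamental solution of the heat equation in `ℝⁿ`: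
`Γ(x,t) = (4πt)^{−n/2} exp(−|x|²/(4t))`. -/
noncomputable def heatKernel (n : ℕ) (x : EuclideanSpace ℝ (Fin n)) (t : ℝ) : ℝ :=
  (4 * π * t) ^ (-(n : ℝ) / 2) * Real.exp (-‖x‖ ^ 2 / (4 * t))

/-- The parametrization `z ↦ z + √(1 - |z|²/R²) x` of the open hemisphere of `S_R` centred at `x`
by the ball of radius `R` in the hyperplane `x^⊥`. -/
noncomputable def capMap {d : ℕ} (R : ℝ) (x : EuclideanSpace ℝ (Fin (d + 1)))
    (z : (Submodule.span ℝ {x})ᗮ) : EuclideanSpace ℝ (Fin (d + 1)) :=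
  (z : EuclideanSpace ℝ (Fin (d + 1))) + Real.sqrt (1 - ‖z‖ ^ 2 / R ^ 2) • x

lemma norm_add_smul_sq {d : ℕ} (x : EuclideanSpace ℝ (Fin (d + 1)))
    (z : (Submodule.span ℝ {x})ᗮ) (a : ℝ) :
    ‖(z : EuclideanSpace ℝ (Fin (d + 1))) + a • x‖ ^ 2 = ‖z‖ ^ 2 + a ^ 2 * ‖x‖ ^ 2 := by
  have h : inner ℝ (z : EuclideanSpace ℝ (Fin (d + 1))) x = 0 :=
    Submodule.mem_orthogonal_singleton_iff_inner_left.1 z.2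
  rw [norm_add_sq_real, inner_smul_right, h, norm_smul, mul_pow, Real.norm_eq_abs, sq_abs]
  simp

/-- On the open hemisphere centred at `x`, `capMap` inverts the orthogonal projection to `x^⊥`. -/
lemma capMap_projection {d : ℕ} {R : ℝ} (hR : 0 < R) {x y : EuclideanSpace ℝ (Fin (d + 1))}
    (hx : ‖x‖ = R) (hy : ‖y‖ = R) (hxy : 0 < inner ℝ x y) :
    capMap R x ((Submodule.span ℝ {x})ᗮ.orthogonalProjectionOnto y) = y := by
  have hP : (((Submodule.span ℝ {x})ᗮ.orthogonalProjectionOnto y :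
      (Submodule.span ℝ {x})ᗮ) : EuclideanSpace ℝ (Fin (d + 1)))
      = y - (inner ℝ x y / R ^ 2) • x := by
    rw [Submodule.orthogonalProjectionOnto_orthogonal]
    simp [Submodule.starProjection_singleton, hx]
  have hn := norm_add_smul_sq x ((Submodule.span ℝ {x})ᗮ.orthogonalProjectionOnto y)
    (inner ℝ x y / R ^ 2)
  rw [hP, sub_add_cancel, hx, hy] at hn
  have h1 : 1 - ‖(Submodule.span ℝ {x})ᗮ.orthogonalProjectionOnto y‖ ^ 2 / R ^ 2
      = (inner ℝ x y / R ^ 2) ^ 2 := by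
    rw [← sub_eq_iff_eq_add] at hn
    rw [← hn]
    field_simp
    ring
  rw [capMap, h1, Real.sqrt_sq (by positivity), hP, sub_add_cancel]

instance isAddHaar_orthogonal {d : ℕ} {x : EuclideanSpace ℝ (Fin (d + 1))} [hx : NeZero x] :
    (μH[(d : ℝ)] : Measure (Submodule.span ℝ {x})ᗮ).IsAddHaarMeasure := by
  have : Fact (Module.finrank ℝ (EuclideanSpace ℝ (Fin (d + 1))) = d + 1) := ⟨by simp⟩
  have h := MeasureTheory.isAddHaarMeasure_hausdorffMeasure (E := (Submodule.span ℝ {x})ᗮ)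
  rwa [Submodule.finrank_orthogonal_span_singleton (n := d) hx.out] at h

lemma measure_sphere_lt_top (d : ℕ) {R : ℝ} (hR : 0 < R) :
    μH[(d : ℝ)] (sphere (0 : EuclideanSpace ℝ (Fin (d + 1))) R) < ⊤ := by
  refine (isCompact_sphere _ _).measure_lt_top_of_nhdsWithin fun x hx => ?_
  rw [mem_sphere_zero_iff_norm] at hx
  have : NeZero x := ⟨by rintro rfl; simp at hx; exact hR.ne hx⟩
  have hf : ContDiffAt ℝ 1 (capMap R x) 0 := by
    unfold capMap
    refine ContDiffAt.add (Submodule.subtypeL (Submodule.span ℝ {x})ᗮ).contDiff.contDiffAt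
      (ContDiffAt.smul (ContDiffAt.sqrt ?_ (by simp)) contDiffAt_const)
    exact contDiffAt_const.sub ((contDiff_norm_sq ℝ).contDiffAt.div_const _)
  obtain ⟨K, t, ht, hK⟩ := hf.exists_lipschitzOnWith
  have ht' : t ∩ ball 0 1 ∈ 𝓝 (0 : (Submodule.span ℝ {x})ᗮ) := inter_mem ht (ball_mem_nhds _ one_pos)
  have hP0 : (Submodule.span ℝ {x})ᗮ.orthogonalProjectionOnto x = 0 :=
    Submodule.orthogonalProjectionOnto_orthogonalComplement_singleton_eq_zero x
  refine ⟨capMap R x '' (t ∩ ball 0 1), ?_, ?_⟩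
  · have h1 : ∀ᶠ y in 𝓝 x,
        (Submodule.span ℝ {x})ᗮ.orthogonalProjectionOnto y ∈ t ∩ ball 0 1 := by
      refine ((Submodule.span ℝ {x})ᗮ.orthogonalProjectionOnto).continuous.continuousAt.eventually ?_
      rw [hP0]
      exact ht'
    have h2 : ∀ᶠ y in 𝓝 x, 0 < inner ℝ x y := by
      have hc : ContinuousAt (fun y => inner ℝ x y) x := by fun_prop
      refine hc.eventually_const_lt ?_
      change 0 < inner ℝ x x
      rw [real_inner_self_eq_norm_sq, hx]
      positivity
    filter_upwards [mem_nhdsWithin_of_mem_nhds h1, mem_nhdsWithin_of_mem_nhds h2,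
      self_mem_nhdsWithin] with y hy1 hy2 hy3
    exact ⟨_, hy1, capMap_projection hR hx (mem_sphere_zero_iff_norm.1 hy3) hy2⟩
  · refine ((hK.mono inter_subset_left).hausdorffMeasure_image_le (Nat.cast_nonneg d)).trans_lt ?_
    refine ENNReal.mul_lt_top (ENNReal.rpow_lt_top_of_nonneg (Nat.cast_nonneg d) (by simp)) ?_
    exact (measure_mono inter_subset_right).trans_lt measure_ball_lt_top

/-- A cap of radius `r` projects onto a set containing the ball of radius `r / 2` in `x^⊥`. The
measure of that ball is expressed through the unit ball of the model space `ℝ^d`, so that the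
constant does not depend on `x`. -/
lemma measure_sphere_cap_ge (d : ℕ) {R : ℝ} (hR : 0 < R) {x : EuclideanSpace ℝ (Fin (d + 1))}
    (hx : ‖x‖ = R) {r : ℝ} (hr : 0 < r) (hrR : r ≤ R) :
    ENNReal.ofReal ((r / 2) ^ d) * μH[(d : ℝ)] (closedBall (0 : EuclideanSpace ℝ (Fin d)) 1) ≤
      μH[(d : ℝ)] (sphere (0 : EuclideanSpace ℝ (Fin (d + 1))) R ∩ closedBall x r) := by
  have hx0 : x ≠ 0 := by rintro rfl; simp at hx; exact hR.ne hx
  have : Fact (Module.finrank ℝ (EuclideanSpace ℝ (Fin (d + 1))) = d + 1) := ⟨by simp⟩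
  have hfr := Submodule.finrank_orthogonal_span_singleton (𝕜 := ℝ) (n := d) hx0
  let e : EuclideanSpace ℝ (Fin d) ≃ₗᵢ[ℝ] (Submodule.span ℝ {x})ᗮ :=
    ((stdOrthonormalBasis ℝ (Submodule.span ℝ {x})ᗮ).reindex (finCongr hfr)).repr.symm
  have hball : ENNReal.ofReal ((r / 2) ^ d) *
      μH[(d : ℝ)] (closedBall (0 : EuclideanSpace ℝ (Fin d)) 1)
      = μH[(d : ℝ)] (closedBall (0 : (Submodule.span ℝ {x})ᗮ) (r / 2)) := by
    have h1 := Measure.addHaar_closedBall' (μH[(d : ℝ)] : Measure (EuclideanSpace ℝ (Fin d))) 0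
      (r := r / 2) (by positivity)
    rw [finrank_euclideanSpace_fin] at h1
    rw [← h1, ← e.isometry.hausdorffMeasure_image (Or.inl (Nat.cast_nonneg d)),
      e.image_closedBall, map_zero]
  rw [hball]
  refine (measure_mono ?_).trans (hausdorffMeasure_orthogonalProjectionOnto_le
    (Submodule.span ℝ {x})ᗮ d _ (Nat.cast_nonneg d))
  intro z hz
  rw [mem_closedBall_zero_iff] at hz
  set q := ‖z‖ ^ 2 / R ^ 2 with hq
  have hqR : q * R ^ 2 = ‖z‖ ^ 2 := by rw [hq]; field_simp
  have hzr : ‖z‖ ^ 2 ≤ r ^ 2 / 4 := by nlinarith [norm_nonneg z]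
  have hq0 : 0 ≤ q := by positivity
  have hq1 : q ≤ 1 := by
    rw [hq, div_le_one (by positivity)]
    nlinarith [norm_nonneg z]
  have ha := Real.sq_sqrt (sub_nonneg.2 hq1)
  have ha0 := Real.sqrt_nonneg (1 - q)
  set a := Real.sqrt (1 - q) with hadef
  refine ⟨capMap R x z, ⟨?_, ?_⟩, ?_⟩
  · rw [mem_sphere_zero_iff_norm, ← sq_eq_sq₀ (norm_nonneg _) hR.le, capMap, norm_add_smul_sq,
      ← hq, ← hadef, hx, ha, ← hqR]
    ring
  · rw [mem_closedBall, dist_eq_norm, ← sq_le_sq₀ (norm_nonneg _) hr.le]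
    have : capMap R x z - x = (z : EuclideanSpace ℝ (Fin (d + 1))) + (a - 1) • x := by
      rw [capMap, ← hq, ← hadef, sub_smul, one_smul]; abel
    rw [this, norm_add_smul_sq, hx]
    have ha1 : a ≤ 1 := by nlinarith
    -- As `0 ≤ a ≤ 1`, one has `(1 - a)² ≤ 1 - a² = q`, so the height is at most `|z|`.
    have h2 : (a - 1) ^ 2 ≤ q := by nlinarith
    have h3 : (a - 1) ^ 2 * R ^ 2 ≤ ‖z‖ ^ 2 := by
      rw [← hqR]; gcongr
    nlinarith [sq_nonneg r]
  · have h1 : (Submodule.span ℝ {x})ᗮ.orthogonalProjectionOnto x = 0 :=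
      Submodule.orthogonalProjectionOnto_orthogonalComplement_singleton_eq_zero x
    rw [capMap, map_add, map_smul, h1, smul_zero, add_zero,
      Submodule.orthogonalProjectionOnto_mem_subspace_eq_self]

/-- Lower bound for the heat kernel surface integral (proof of Theorem 3.2): for the
sphere `S_R ⊂ ℝⁿ` (`n ≥ 2`) with its `(n−1)`-dimensional surface (Hausdorff) measure,
there are `c > 0` and `s₀ > 0` such that for all `x ∈ S_R` and `s ∈ (0, s₀)`:
`∫_{S_R} Γ(x−y, s) dσ(y) ≥ c s^{−1/2}`. -/
theorem heat_kernel_surface_integral_lower_bound {n : ℕ} (hn : 2 ≤ n) {R : ℝ}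
    (hR : 0 < R) :
    ∃ c : ℝ, 0 < c ∧ ∃ s₀ : ℝ, 0 < s₀ ∧
      ∀ x ∈ sphere (0 : EuclideanSpace ℝ (Fin n)) R, ∀ s ∈ Ioo (0 : ℝ) s₀,
        c / Real.sqrt s ≤
          ∫ y in sphere (0 : EuclideanSpace ℝ (Fin n)) R,
            heatKernel n (x - y) s ∂(μH[(n : ℝ) - 1]) := by
  obtain ⟨d, rfl⟩ : ∃ d, n = d + 1 := ⟨n - 1, by omega⟩
  have hcast : ((d + 1 : ℕ) : ℝ) - 1 = d := by push_cast; ring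
  rw [hcast]
  set B := μH[(d : ℝ)] (closedBall (0 : EuclideanSpace ℝ (Fin d)) 1) with hB
  have hBpos : 0 < B := measure_closedBall_pos _ _ one_pos
  have hBtop : B ≠ ⊤ := measure_closedBall_lt_top.ne
  have hA : 0 < B.toReal := ENNReal.toReal_pos hBpos.ne' hBtop
  refine ⟨(4 * π) ^ (-((d + 1 : ℕ) : ℝ) / 2) * Real.exp (-1 / 4) * (B.toReal / 2 ^ d),
    by positivity, R ^ 2, by positivity, ?_⟩
  rintro x hx s ⟨hs, hsR⟩
  rw [mem_sphere_zero_iff_norm] at hx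
  have hr : 0 < √s := Real.sqrt_pos.2 hs
  have hrR : √s ≤ R := Real.sqrt_le_iff.2 ⟨hR.le, hsR.le⟩
  have hfin := measure_sphere_lt_top d hR
  have hcont : Continuous fun y : EuclideanSpace ℝ (Fin (d + 1)) =>
      heatKernel (d + 1) (x - y) s := by
    unfold heatKernel
    fun_prop
  have hint : IntegrableOn (fun y : EuclideanSpace ℝ (Fin (d + 1)) =>
      heatKernel (d + 1) (x - y) s) (sphere 0 R) (μH[(d : ℝ)]) :=
    hcont.continuousOn.integrableOn_of_subset_isCompact (isCompact_sphere _ _)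
      isClosed_sphere.measurableSet subset_rfl hfin.ne
  have hnn : ∀ y : EuclideanSpace ℝ (Fin (d + 1)), 0 ≤ heatKernel (d + 1) (x - y) s := by
    intro y; unfold heatKernel; positivity
  set S := sphere (0 : EuclideanSpace ℝ (Fin (d + 1))) R ∩ closedBall x √s with hS
  have hSm : MeasurableSet S := isClosed_sphere.measurableSet.inter measurableSet_closedBall
  have hStop : μH[(d : ℝ)] S ≠ ⊤ := ((measure_mono inter_subset_left).trans_lt hfin).ne
  have hmeas : (√s / 2) ^ d * B.toReal ≤ (μH[(d : ℝ)] S).toReal := by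
    have h := ENNReal.toReal_mono hStop (measure_sphere_cap_ge d hR hx hr hrR)
    rwa [ENNReal.toReal_mul, ENNReal.toReal_ofReal (by positivity)] at h
  have hlow : ∀ y ∈ S, (4 * π * s) ^ (-((d + 1 : ℕ) : ℝ) / 2) * Real.exp (-1 / 4) ≤
      heatKernel (d + 1) (x - y) s := by
    rintro y ⟨-, hy⟩
    rw [mem_closedBall', dist_eq_norm] at hy
    have hy2 : ‖x - y‖ ^ 2 ≤ s := by
      rw [← Real.sq_sqrt hs.le]; gcongr
    unfold heatKernel
    gcongr ?_ * Real.exp ?_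
    rw [div_le_div_iff₀ (by norm_num) (by positivity)]
    nlinarith
  have hpow : (4 * π * s) ^ (-((d + 1 : ℕ) : ℝ) / 2) * (√s) ^ d =
      (4 * π) ^ (-((d + 1 : ℕ) : ℝ) / 2) / √s := by
    rw [Real.mul_rpow (by positivity) hs.le, mul_assoc, div_eq_mul_inv]
    congr 1
    rw [Real.sqrt_eq_rpow, ← Real.rpow_natCast, ← Real.rpow_mul hs.le, ← Real.rpow_add hs,
      ← Real.rpow_neg hs.le]
    congr 1
    push_cast
    ring
  calc (4 * π) ^ (-((d + 1 : ℕ) : ℝ) / 2) * Real.exp (-1 / 4) * (B.toReal / 2 ^ d) / √s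
      = (4 * π * s) ^ (-((d + 1 : ℕ) : ℝ) / 2) * Real.exp (-1 / 4) *
          ((√s / 2) ^ d * B.toReal) := by
        rw [div_pow]
        linear_combination (-(Real.exp (-1 / 4) * B.toReal / 2 ^ d)) * hpow
    _ ≤ (4 * π * s) ^ (-((d + 1 : ℕ) : ℝ) / 2) * Real.exp (-1 / 4) *
          (μH[(d : ℝ)] S).toReal := by gcongr
    _ ≤ ∫ y in S, heatKernel (d + 1) (x - y) s ∂μH[(d : ℝ)] :=
        setIntegral_ge_of_const_le_real hSm hStop hlow (hint.mono_set inter_subset_left)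
    _ ≤ _ := setIntegral_mono_set hint (Eventually.of_forall hnn)
        (Eventually.of_forall inter_subset_left)
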